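/- Let α ∈ ℝ, v > 0, Δ ∈ ℝ, and μ_{G1}, μ_{G2}, μ_{P1}, μ_{P2} ∈ ℝ with (μ_{P1} − μ_{P2})² = Δ², (μ_{G1} − μ_{G2})² = Δ², and suppose the cross terms cancel: N(μ_{G1}; μ_{P1}, 2v) + N(μ_{G2}; μ_{P2}, 2v) = N(μ_{G1}; μ_{P2}, 2v) + N(μ_{G2}; μ_{P1}, 2v). Define ρ₁ = α·N(·; μ_{G1}, v) + (1−α)·N(·; μ_{P1}, v) and ρ₄ = α·N(·; μ_{G2}, v) + (1−α)·N(·; μ_{P2}, v). Then ∫ (ρ₁ − ρ₄)² = 2((1−α)² + α²)·A·(1 − exp(−Δ²/(4v))), where A = 1/√(4πv). -/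

import Mathlib

open MeasureTheory Real

/-- The Gaussian probability density on `ℝ` with mean `μ` and variance `v`:
`N(x; μ, v) = (2πv)^{-1/2} exp(-(x-μ)²/(2v))`. -/
noncomputable def gaussPdf (μ v x : ℝ) : ℝ :=
    (Real.sqrt (2 * Real.pi * v))⁻¹ * Real.exp (-(x - μ) ^ 2 / (2 * v))

/-!
Write `ρ₁ - ρ₄ = α (N_{G1} - N_{G2}) + (1 - α) (N_{P1} - N_{P2})`. Since the product of two Gaussian
densities is a constant times a Gaussian density, `⟪N(·; a, v), N(·; b, w)⟫ = N(a; b, v + w)` in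
`L²(ℝ)`. Hence the cancellation of the cross terms says exactly that the two differences are
orthogonal, and the claim is Pythagoras' theorem.
-/

lemma gaussPdf_eq_gaussianPDFReal {v : ℝ} (hv : 0 ≤ v) (μ : ℝ) :
    gaussPdf μ v = ProbabilityTheory.gaussianPDFReal μ ⟨v, hv⟩ :=
  rfl

lemma integrable_gaussPdf {v : ℝ} (hv : 0 ≤ v) (μ : ℝ) : Integrable (gaussPdf μ v) :=
  gaussPdf_eq_gaussianPDFReal hv μ ▸ ProbabilityTheory.integrable_gaussianPDFReal μ ⟨v, hv⟩

lemma integral_gaussPdf {v : ℝ} (hv : 0 < v) (μ : ℝ) : ∫ x, gaussPdf μ v x = 1 := by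
  have hv' : (⟨v, hv.le⟩ : NNReal) ≠ 0 := NNReal.coe_ne_zero.mp hv.ne'
  rw [gaussPdf_eq_gaussianPDFReal hv.le]
  exact ProbabilityTheory.integral_gaussianPDFReal_eq_one μ hv'

lemma gaussPdf_comm (v a b : ℝ) : gaussPdf a v b = gaussPdf b v a := by
  simp only [gaussPdf, sub_sq_comm b a]

lemma gaussPdf_self (μ v : ℝ) : gaussPdf μ v μ = (√(2 * π * v))⁻¹ := by
  simp [gaussPdf]

lemma gaussPdf_mul_gaussPdf {v w : ℝ} (hv : 0 < v) (hw : 0 < w) (a b x : ℝ) :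
    gaussPdf a v x * gaussPdf b w x =
      gaussPdf b (v + w) a * gaussPdf ((w * a + v * b) / (v + w)) (v * w / (v + w)) x := by
  have normalization : √(2 * π * v) * √(2 * π * w) =
      √(2 * π * (v + w)) * √(2 * π * (v * w / (v + w))) := by
    rw [← sqrt_mul (by positivity), ← sqrt_mul (by positivity)]
    congr 1
    field_simp
  have complete_square : -(x - a) ^ 2 / (2 * v) + -(x - b) ^ 2 / (2 * w) =
      -(a - b) ^ 2 / (2 * (v + w)) +
        -(x - (w * a + v * b) / (v + w)) ^ 2 / (2 * (v * w / (v + w))) := by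
    field_simp
    ring
  simp only [gaussPdf]
  rw [mul_mul_mul_comm, ← mul_inv, ← exp_add, normalization, complete_square, exp_add, mul_inv,
    mul_mul_mul_comm]

lemma integral_gaussPdf_mul_gaussPdf {v w : ℝ} (hv : 0 < v) (hw : 0 < w) (a b : ℝ) :
    ∫ x, gaussPdf a v x * gaussPdf b w x = gaussPdf b (v + w) a := by
  simp_rw [gaussPdf_mul_gaussPdf hv hw]
  rw [integral_const_mul, integral_gaussPdf (by positivity), mul_one]

lemma memLp_two_gaussPdf {v : ℝ} (hv : 0 < v) (μ : ℝ) : MemLp (gaussPdf μ v) 2 := by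
  rw [memLp_two_iff_integrable_sq (integrable_gaussPdf hv.le μ).aestronglyMeasurable]
  simp_rw [sq (gaussPdf μ v _), gaussPdf_mul_gaussPdf hv hv]
  exact (integrable_gaussPdf (by positivity) _).const_mul _

lemma integral_gaussPdf_sub_mul_gaussPdf_sub {v₁ v₂ w₁ w₂ : ℝ}
    (hv₁ : 0 < v₁) (hv₂ : 0 < v₂) (hw₁ : 0 < w₁) (hw₂ : 0 < w₂) (a₁ a₂ b₁ b₂ : ℝ) :
    ∫ x, (gaussPdf a₁ v₁ x - gaussPdf a₂ v₂ x) * (gaussPdf b₁ w₁ x - gaussPdf b₂ w₂ x) =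
      gaussPdf b₁ (v₁ + w₁) a₁ - gaussPdf b₂ (v₁ + w₂) a₁ -
        (gaussPdf b₁ (v₂ + w₁) a₂ - gaussPdf b₂ (v₂ + w₂) a₂) := by
  have integrable_mul {v w : ℝ} (hv : 0 < v) (hw : 0 < w) (a b : ℝ) :
      Integrable fun x ↦ gaussPdf a v x * gaussPdf b w x :=
    (memLp_two_gaussPdf hv a).integrable_mul (memLp_two_gaussPdf hw b)
  have h₁₁ := integrable_mul hv₁ hw₁ a₁ b₁
  have h₁₂ := integrable_mul hv₁ hw₂ a₁ b₂
  have h₂₁ := integrable_mul hv₂ hw₁ a₂ b₁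
  have h₂₂ := integrable_mul hv₂ hw₂ a₂ b₂
  simp_rw [sub_mul, mul_sub]
  rw [integral_sub (h₁₁.sub' h₁₂) (h₂₁.sub' h₂₂), integral_sub h₁₁ h₁₂, integral_sub h₂₁ h₂₂]
  simp only [integral_gaussPdf_mul_gaussPdf, hv₁, hv₂, hw₁, hw₂]

lemma integral_gaussPdf_sub_sq {v : ℝ} (hv : 0 < v) (a b : ℝ) :
    ∫ x, (gaussPdf a v x - gaussPdf b v x) ^ 2 =
      2 * (1 / √(4 * π * v)) * (1 - exp (-(a - b) ^ 2 / (4 * v))) := by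
  have variance_eq : 2 * (v + v) = 4 * v := by ring
  have normalization : 2 * π * (v + v) = 4 * π * v := by ring
  simp_rw [sq (gaussPdf a v _ - _)]
  rw [integral_gaussPdf_sub_mul_gaussPdf_sub hv hv hv hv, gaussPdf_comm _ a b, gaussPdf_self,
    gaussPdf_self, gaussPdf, variance_eq, normalization]
  ring

lemma integral_const_mul_add_const_mul_sq_of_integral_mul_eq_zero {Ω : Type*}
    [MeasurableSpace Ω] {ν : Measure Ω} {f g : Ω → ℝ} (hf : MemLp f 2 ν) (hg : MemLp g 2 ν)
    (hfg : ∫ x, f x * g x ∂ν = 0) (α β : ℝ) :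
    ∫ x, (α * f x + β * g x) ^ 2 ∂ν = α ^ 2 * ∫ x, f x ^ 2 ∂ν + β ^ 2 * ∫ x, g x ^ 2 ∂ν := by
  have hff : Integrable (fun x ↦ α ^ 2 * f x ^ 2) ν := hf.integrable_sq.const_mul _
  have hgg : Integrable (fun x ↦ β ^ 2 * g x ^ 2) ν := hg.integrable_sq.const_mul _
  have hcross : Integrable (fun x ↦ 2 * α * β * (f x * g x)) ν :=
    (hf.integrable_mul hg).const_mul _
  calc ∫ x, (α * f x + β * g x) ^ 2 ∂ν
      = ∫ x, α ^ 2 * f x ^ 2 + β ^ 2 * g x ^ 2 + 2 * α * β * (f x * g x) ∂ν := by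
        congr 1 with x
        ring
    _ = α ^ 2 * ∫ x, f x ^ 2 ∂ν + β ^ 2 * ∫ x, g x ^ 2 ∂ν := by
        rw [integral_add (hff.fun_add hgg) hcross, integral_add hff hgg]
        simp only [integral_const_mul, hfg, mul_zero, add_zero]

theorem mixture_L2_dist_rho1_rho4_simplified_general {v w : ℝ} (hv : 0 < v) (hw : 0 < w)
    (α β μG1 μG2 μP1 μP2 : ℝ)
    (hcross : gaussPdf μP1 (v + w) μG1 + gaussPdf μP2 (v + w) μG2 =
      gaussPdf μP2 (v + w) μG1 + gaussPdf μP1 (v + w) μG2) :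
    ∫ x, ((α * gaussPdf μG1 v x + β * gaussPdf μP1 w x) -
        (α * gaussPdf μG2 v x + β * gaussPdf μP2 w x)) ^ 2 =
      α ^ 2 * (2 * (1 / √(4 * π * v)) * (1 - exp (-(μG1 - μG2) ^ 2 / (4 * v)))) +
        β ^ 2 * (2 * (1 / √(4 * π * w)) * (1 - exp (-(μP1 - μP2) ^ 2 / (4 * w)))) := by
  have orthogonal : ∫ x, (gaussPdf μG1 v x - gaussPdf μG2 v x) *
      (gaussPdf μP1 w x - gaussPdf μP2 w x) = 0 := by
    rw [integral_gaussPdf_sub_mul_gaussPdf_sub hv hv hw hw]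
    linear_combination hcross
  have hG : MemLp (fun x ↦ gaussPdf μG1 v x - gaussPdf μG2 v x) 2 :=
    (memLp_two_gaussPdf hv μG1).sub (memLp_two_gaussPdf hv μG2)
  have hP : MemLp (fun x ↦ gaussPdf μP1 w x - gaussPdf μP2 w x) 2 :=
    (memLp_two_gaussPdf hw μP1).sub (memLp_two_gaussPdf hw μP2)
  simp_rw [add_sub_add_comm, ← mul_sub]
  rw [integral_const_mul_add_const_mul_sq_of_integral_mul_eq_zero hG hP orthogonal,
    integral_gaussPdf_sub_sq hv, integral_gaussPdf_sub_sq hw]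

/-- Equation 16 of the paper: if the surface-point color means satisfy
`(μP1 - μP2)² = Δ²` and `(μG1 - μG2)² = Δ²` and the cross terms cancel, then for
`ρ₁ = α·N(·; μG1, v) + (1-α)·N(·; μP1, v)` and `ρ₄ = α·N(·; μG2, v) + (1-α)·N(·; μP2, v)`,
`∫ (ρ₁ - ρ₄)² = 2((1-α)² + α²)·A·(1 - exp(-Δ²/(4v)))` where `A = 1/√(4πv)`. -/
theorem mixture_L2_dist_rho1_rho4_simplified
    (α v Δ μG1 μG2 μP1 μP2 : ℝ) (hv : 0 < v)
    (hP : (μP1 - μP2) ^ 2 = Δ ^ 2) (hG : (μG1 - μG2) ^ 2 = Δ ^ 2)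
    (hcross : gaussPdf μP1 (2 * v) μG1 + gaussPdf μP2 (2 * v) μG2 =
      gaussPdf μP2 (2 * v) μG1 + gaussPdf μP1 (2 * v) μG2) :
    ∫ lam : ℝ,
        ((α * gaussPdf μG1 v lam + (1 - α) * gaussPdf μP1 v lam) -
          (α * gaussPdf μG2 v lam + (1 - α) * gaussPdf μP2 v lam)) ^ 2 =
      2 * ((1 - α) ^ 2 + α ^ 2) * (1 / Real.sqrt (4 * Real.pi * v)) *
        (1 - Real.exp (-Δ ^ 2 / (4 * v))) := by
  rw [mixture_L2_dist_rho1_rho4_simplified_general hv hv _ _ _ _ _ _ (two_mul v ▸ hcross), hG, hP]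
  ring
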